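/- For any real t > 1 and any positive integer n₁ ≥ max{ 6, 1/(1−2^{−1/(t−1)}) }, one has (1−2^{1−t})·n₁/(2^{2t}(t−1)·p_{n₁}^t) < ∑_{n=n₁}^{∞} p_n^{-t} < 2^{1+t}·n₁/((t−1)·p_{n₁}^t). -/

import Mathlib

/-- The `n`-th prime number, 1-indexed: `nthPrime 1 = 2`, `nthPrime 2 = 3`, ... -/
noncomputable def nthPrime (n : ℕ) : ℕ := Nat.nth Nat.Prime (n - 1)

theorem Nat.prime_iff_coprime_of_lt_sq_forty_one {k : ℕ} (hk : k < 1681) :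
    k.Prime ↔ k.gcd 7420738134810 = 1 ∧ k ≠ 1 ∨
      k ∈ [2, 3, 5, 7, 11, 13, 17, 19, 23, 29, 31, 37] := by
  have hM : 7420738134810 = 2 * 3 * 5 * 7 * 11 * 13 * 17 * 19 * 23 * 29 * 31 * 37 := by norm_num
  constructor
  · intro h
    rcases (Nat.coprime_or_dvd_of_prime h 7420738134810) with h1 | h1
    · exact .inl ⟨h1, h.ne_one⟩
    · right
      rw [hM] at h1
      simp only [h.dvd_mul] at h1
      simp only [List.mem_cons, List.not_mem_nil, or_false]
      rcases h1 with ((((((((((h1 | h1) | h1) | h1) | h1) | h1) | h1) | h1) | h1) | h1) | h1) | h1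
      all_goals
        have := (Nat.prime_dvd_prime_iff_eq h (by norm_num)).1 h1
        simp [this]
  · rintro (⟨h1, h2⟩ | h)
    · by_contra h3
      have hpos : 0 < k := by
        rcases Nat.eq_zero_or_pos k with rfl | h
        · norm_num at h1
        · exact h
      have hq := Nat.minFac_prime h2
      have hs := Nat.minFac_sq_le_self hpos h3
      have hlt : k.minFac < 41 := by nlinarith
      have hd : k.minFac ∣ 7420738134810 := by
        generalize k.minFac = q at hq hlt
        interval_cases q <;> revert hq <;> norm_num
      have := Nat.dvd_gcd (Nat.minFac_dvd k) hd
      rw [h1] at this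
      exact hq.one_lt.ne' (Nat.dvd_one.1 this)
    · simp only [List.mem_cons, List.not_mem_nil, or_false] at h
      rcases h with rfl | rfl | rfl | rfl | rfl | rfl | rfl | rfl | rfl | rfl | rfl | rfl <;> norm_num

theorem Nat.primeCounting_eq_count_coprime {N : ℕ} (hN : N < 1681) :
    N.primeCounting = Nat.count (fun k ↦ k.gcd 7420738134810 = 1 ∧ k ≠ 1 ∨
      k ∈ [2, 3, 5, 7, 11, 13, 17, 19, 23, 29, 31, 37]) (N + 1) := by
  rw [Nat.primeCounting, Nat.primeCounting', Nat.count_eq_card_filter_range,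
    Nat.count_eq_card_filter_range]
  congr 1
  refine Finset.filter_congr fun k hk ↦ Nat.prime_iff_coprime_of_lt_sq_forty_one ?_
  rw [Finset.mem_range] at hk
  omega

theorem Nat.two_mul_primeCounting_le_primeCounting_four_mul {x : ℕ} (h1 : 13 ≤ x) (h2 : x < 512) :
    2 * x.primeCounting ≤ (4 * x).primeCounting + 1 := by
  have key {a b : ℕ} (ha : a ≤ x) (hb : x ≤ b)
      (h : 2 * b.primeCounting ≤ (4 * a).primeCounting + 1) :
      2 * x.primeCounting ≤ (4 * x).primeCounting + 1 := by
    have h3 := Nat.monotone_primeCounting hb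
    have h4 := Nat.monotone_primeCounting (show 4 * a ≤ 4 * x by omega)
    omega
  have : x ≤ 22 ∨ 23 ≤ x ∧ x ≤ 40 ∨ 41 ≤ x ∧ x ≤ 70 ∨ 71 ≤ x ∧ x ≤ 130 ∨ 131 ≤ x ∧ x ≤ 232 ∨
    233 ≤ x ∧ x ≤ 408 ∨ 409 ≤ x ∧ x ≤ 512 := by omega
  rcases this with h | ⟨h3, h⟩ | ⟨h3, h⟩ | ⟨h3, h⟩ | ⟨h3, h⟩ | ⟨h3, h⟩ | ⟨h3, h⟩
  · refine key h1 h ?_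
    rw [primeCounting_eq_count_coprime (by norm_num), primeCounting_eq_count_coprime (by norm_num)]
    decide +kernel
  all_goals
    refine key h3 h ?_
    rw [primeCounting_eq_count_coprime (by norm_num), primeCounting_eq_count_coprime (by norm_num)]
    decide +kernel

theorem Nat.primeCounting_two_mul_sub_mul_log_le (k : ℕ) :
    ((2 * k).primeCounting - k.primeCounting : ℝ) * Real.log k ≤ 2 * k * Real.log 2 := by
  rcases Nat.eq_zero_or_pos k with rfl | hk
  · simp
  have hsub : k.primesLE ⊆ (2 * k).primesLE := Nat.primesLE_mono (by omega)
  have h1 : ((2 * k).primeCounting - k.primeCounting : ℝ) * Real.log k ≤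
      Chebyshev.theta (2 * k : ℕ) - Chebyshev.theta k := by
    rw [Chebyshev.theta_eq_sum_primesLE_log, Chebyshev.theta_eq_sum_primesLE_log,
      ← Finset.sum_sdiff_eq_sub hsub]
    rw [← Nat.primesLE_card_eq_primeCounting, ← Nat.primesLE_card_eq_primeCounting,
      ← Finset.cast_card_sdiff hsub, ← nsmul_eq_mul]
    refine Finset.card_nsmul_le_sum _ _ _ fun p hp ↦ ?_
    rw [Finset.mem_sdiff, Nat.mem_primesLE, Nat.mem_primesLE] at hp
    have : k ≤ p := by
      by_contra hc
      exact hp.2 ⟨by omega, hp.1.2⟩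
    exact Real.log_le_log (by exact_mod_cast hk) (by exact_mod_cast this)
  have h2 : Chebyshev.theta (2 * k : ℕ) ≤ Chebyshev.theta k + 2 * k * Real.log 2 := by
    rw [Chebyshev.theta_eq_log_primorial, Chebyshev.theta_eq_log_primorial, Nat.floor_natCast,
      Nat.floor_natCast]
    have h3 : primorial (2 * k) ≤ primorial k * 2 ^ (2 * k) := by
      have := primorial_add_le (le_refl k)
      rw [← two_mul] at this
      exact this.trans (Nat.mul_le_mul_left _ (Nat.choose_le_two_pow _ _))
    have h4 : (primorial (2 * k) : ℝ) ≤ primorial k * 2 ^ (2 * k) := by exact_mod_cast h3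
    have h5 : (0 : ℝ) < primorial k := by exact_mod_cast primorial_pos k
    have h6 : (0 : ℝ) < primorial (2 * k) := by exact_mod_cast primorial_pos (2 * k)
    calc _ ≤ Real.log (primorial k * 2 ^ (2 * k)) := Real.log_le_log h6 h4
      _ = _ := by
        rw [Real.log_mul h5.ne' (by positivity), Real.log_pow]
        push_cast
        ring
  linarith

theorem Real.log_le_mul_log_two_of_le_two_pow {x : ℝ} (hx : 0 < x) {k : ℕ} (h : x ≤ 2 ^ k) :
    Real.log x ≤ k * Real.log 2 := by
  rw [← Real.log_pow]
  exact Real.log_le_log hx h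

theorem Real.mul_log_two_le_log_of_two_pow_le {x : ℝ} {k : ℕ} (h : 2 ^ k ≤ x) :
    k * Real.log 2 ≤ Real.log x := by
  rw [← Real.log_pow]
  exact Real.log_le_log (by positivity) h

theorem Nat.three_mul_primeCounting_le {n : ℕ} (h : 6 ≤ n) : 3 * n.primeCounting ≤ n + 9 := by
  have h1 := Nat.primeCounting_add_le (a := 6) (k := 6) (by norm_num) le_rfl (n - 6)
  have h2 : Nat.totient 6 = 2 := by decide
  have h3 : Nat.primeCounting 6 = 3 := by decide
  rw [h2, h3, Nat.add_sub_cancel' h] at h1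
  omega

theorem Nat.primeCounting_mul_log_le_of_le {n : ℕ} (h1 : 13 ≤ n) (h2 : n ≤ 256) :
    n.primeCounting * Real.log n ≤ 2 * n := by
  have h3 : (3 * n.primeCounting : ℝ) ≤ n + 9 := by
    exact_mod_cast Nat.three_mul_primeCounting_le (by omega)
  have hn : (13 : ℝ) ≤ n := by exact_mod_cast h1
  have hlog2 := Real.log_two_lt_d9
  have key {k : ℕ} {a : ℝ} (ha : a ≤ n) (hk : (n : ℝ) ≤ 2 ^ k)
      (h : (k : ℝ) * 0.6931471808 * (a + 9) ≤ 6 * a) (hk6 : (k : ℝ) * 0.6931471808 ≤ 6) :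
      n.primeCounting * Real.log n ≤ 2 * n := by
    have h4 := Real.log_le_mul_log_two_of_le_two_pow (by linarith) hk
    have h5 : Real.log n ≤ k * 0.6931471808 :=
      h4.trans (mul_le_mul_of_nonneg_left hlog2.le (by positivity))
    have h6 : 0 ≤ Real.log n := Real.log_natCast_nonneg n
    have h7 : (3 * n.primeCounting : ℝ) * Real.log n ≤ (n + 9) * Real.log n :=
      mul_le_mul_of_nonneg_right h3 h6
    nlinarith
  have : n ≤ 32 ∨ 32 ≤ n ∧ n ≤ 64 ∨ 64 ≤ n ∧ n ≤ 128 ∨ 128 ≤ n := by omega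
  rcases this with h | ⟨h, hb⟩ | ⟨h, hb⟩ | h
  · refine key (k := 5) (a := 13) hn ?_ ?_ ?_
    · norm_num; exact_mod_cast h
    all_goals norm_num
  · refine key (k := 6) (a := 32) (by exact_mod_cast h) ?_ ?_ ?_
    · norm_num; exact_mod_cast hb
    all_goals norm_num
  · refine key (k := 7) (a := 64) (by exact_mod_cast h) ?_ ?_ ?_
    · norm_num; exact_mod_cast hb
    all_goals norm_num
  · refine key (k := 8) (a := 128) (by exact_mod_cast h) ?_ ?_ ?_
    · norm_num; exact_mod_cast h2
    all_goals norm_num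

theorem Nat.primeCounting_mul_log_le {n : ℕ} (hn : 13 ≤ n) :
    n.primeCounting * Real.log n ≤ 2 * n := by
  induction n using Nat.strong_induction_on with
  | _ n ih =>
  rcases le_or_gt n 256 with h | h
  · exact Nat.primeCounting_mul_log_le_of_le hn h
  obtain ⟨k, hk⟩ : ∃ k, n = 2 * k ∨ n + 1 = 2 * k := ⟨(n + 1) / 2, by omega⟩
  have hpi : n.primeCounting ≤ (2 * k).primeCounting := Nat.monotone_primeCounting (by omega)
  have hk128 : 128 ≤ k := by omega
  have ihk := ih k (by omega) (by omega)
  have hs := Nat.primeCounting_two_mul_sub_mul_log_le k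
  have hkR : (128 : ℝ) ≤ k := by exact_mod_cast hk128
  have hnk : (n : ℝ) ≤ 2 * k := by exact_mod_cast (show n ≤ 2 * k by omega)
  have hkn : (2 * k : ℝ) ≤ n + 1 := by exact_mod_cast (show 2 * k ≤ n + 1 by omega)
  have hpiR : (n.primeCounting : ℝ) ≤ (2 * k).primeCounting := by exact_mod_cast hpi
  have hlk := Real.mul_log_two_le_log_of_two_pow_le (k := 7) (x := (k : ℝ))
    (by norm_num; exact_mod_cast hk128)
  have hln : Real.log n ≤ Real.log 2 + Real.log k := by
    rw [← Real.log_mul (by norm_num) (by positivity)]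
    exact Real.log_le_log (by exact_mod_cast (show 0 < n by omega)) hnk
  have hl2 := Real.log_two_lt_d9
  have hl2_gt := Real.log_two_gt_d9
  set L := Real.log k
  set P : ℝ := (n.primeCounting : ℝ)
  have hL : 4.85 ≤ L := by push_cast at hlk; linarith
  have hP : P * L ≤ 3.3863 * k := by nlinarith
  have hP0 : 0 ≤ P := by positivity
  have h1 : P * Real.log n ≤ P * (Real.log 2 + L) := mul_le_mul_of_nonneg_left hln hP0
  have h2 : P * 4.85 ≤ P * L := mul_le_mul_of_nonneg_left hL hP0
  have h3 : P * Real.log 2 ≤ P * 0.6931471808 := mul_le_mul_of_nonneg_left hl2.le hP0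
  nlinarith

theorem Nat.le_primeCounting_mul_log_of_log_succ_le {n : ℕ} {a : ℝ}
    (h : Real.log (n + 1) ≤ (Real.log 2 - a) * n) : a * n ≤ n.primeCounting * Real.log n := by
  have := (Chebyshev.psi_ge n).trans (Chebyshev.psi_le_primeCounting_mul_log n)
  linarith

theorem Real.log_natCast_add_one_le (n k : ℕ) :
    Real.log (n + 1) ≤ k * Real.log 2 + (n + 1) / 2 ^ k - 1 := by
  have h1 : (0 : ℝ) < (n + 1) / 2 ^ k := by positivity
  have h2 := Real.log_le_sub_one_of_pos h1
  rw [Real.log_div (by positivity) (by positivity), Real.log_pow] at h2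
  linarith

theorem Nat.le_primeCounting_mul_log_of_512_le {n : ℕ} (hn : 512 ≤ n) :
    0.68 * n ≤ n.primeCounting * Real.log n := by
  apply Nat.le_primeCounting_mul_log_of_log_succ_le
  have h1 := Real.log_natCast_add_one_le n 9
  have hnR : (512 : ℝ) ≤ n := by exact_mod_cast hn
  have hl2 := Real.log_two_lt_d9
  have hl2_gt := Real.log_two_gt_d9
  norm_num at h1 ⊢
  nlinarith

theorem Nat.le_primeCounting_mul_log {n : ℕ} (hn : 13 ≤ n) :
    0.6 * n ≤ n.primeCounting * Real.log n := by
  have hl2 := Real.log_two_lt_d9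
  have hl2_gt := Real.log_two_gt_d9
  have key {a b u k : ℕ} (ha : a ≤ n) (hb : n ≤ b) (hu : u = a.primeCounting)
      (hk : 2 ^ k ≤ a) (h : 0.6 * b ≤ u * (k * (0.693 : ℝ))) :
      0.6 * n ≤ n.primeCounting * Real.log n := by
    have hn : (2 : ℝ) ^ k ≤ n := by exact_mod_cast hk.trans ha
    have h1 := Real.mul_log_two_le_log_of_two_pow_le hn
    have h2 : (u : ℝ) ≤ n.primeCounting := by
      rw [hu]; exact_mod_cast Nat.monotone_primeCounting ha
    have h3 : (n : ℝ) ≤ b := by exact_mod_cast hb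
    have h4 : (k : ℝ) * 0.693 ≤ k * Real.log 2 :=
      mul_le_mul_of_nonneg_left (by linarith) (by positivity)
    calc 0.6 * (n : ℝ) ≤ 0.6 * b := by linarith
      _ ≤ u * (k * 0.693) := h
      _ ≤ n.primeCounting * Real.log n :=
        mul_le_mul h2 (h4.trans h1) (by positivity) (by positivity)
  have : n ≤ 19 ∨ 19 ≤ n ∧ n ≤ 29 ∨ 29 ≤ n ∧ n ≤ 41 ∨ 41 ≤ n := by omega
  rcases this with h | ⟨h, hb⟩ | ⟨h, hb⟩ | h
  · exact key (u := 6) (k := 3) hn h (by decide) (by norm_num) (by norm_num)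
  · exact key (u := 8) (k := 4) h hb (by decide) (by norm_num) (by norm_num)
  · exact key (u := 10) (k := 4) h hb (by decide) (by norm_num) (by norm_num)
  · apply Nat.le_primeCounting_mul_log_of_log_succ_le
    have h1 := Real.log_natCast_add_one_le n 5
    have hnR : (41 : ℝ) ≤ n := by exact_mod_cast h
    norm_num at h1 ⊢
    nlinarith

theorem nthPrime_prime (n : ℕ) : (nthPrime n).Prime := Nat.prime_nth_prime _

theorem nthPrime_mono : Monotone nthPrime := fun _ _ h ↦
  Nat.nth_monotone Nat.infinite_setOfPred_prime (Nat.sub_le_sub_right h 1)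

theorem primeCounting_nthPrime {n : ℕ} (hn : 1 ≤ n) : (nthPrime n).primeCounting = n := by
  rw [nthPrime, Nat.primeCounting, Nat.primeCounting',
    Nat.count_nth_succ_of_infinite Nat.infinite_setOfPred_prime]
  omega

theorem nthPrime_le_of_le_primeCounting {m x : ℕ} (hm : 1 ≤ m) (h : m ≤ x.primeCounting) :
    nthPrime m ≤ x := by
  by_contra! hlt
  have h1 : x.primeCounting ≤ Nat.primeCounting' (nthPrime m) :=
    Nat.monotone_primeCounting' (by omega)
  rw [nthPrime, Nat.primeCounting'_nth_eq] at h1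
  omega

theorem thirteen_le_nthPrime {n : ℕ} (hn : 6 ≤ n) : 13 ≤ nthPrime n := by
  by_contra! hlt
  have h1 : (nthPrime n).primeCounting ≤ Nat.primeCounting 12 :=
    Nat.monotone_primeCounting (by omega)
  rw [primeCounting_nthPrime (by omega), show Nat.primeCounting 12 = 5 by decide] at h1
  omega

theorem nthPrime_mul_le_mul_nthPrime {n m : ℕ} (hn : 6 ≤ n) (hnm : n ≤ m) :
    (3 * nthPrime n * m : ℝ) ≤ 10 * n * nthPrime m := by
  have h1 := Nat.primeCounting_mul_log_le (thirteen_le_nthPrime (hn.trans hnm))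
  have h2 := Nat.le_primeCounting_mul_log (thirteen_le_nthPrime hn)
  rw [primeCounting_nthPrime (by omega)] at h1 h2
  have h3 : Real.log (nthPrime n) ≤ Real.log (nthPrime m) :=
    Real.log_le_log (by exact_mod_cast (nthPrime_prime n).pos) (by exact_mod_cast nthPrime_mono hnm)
  have h4 : (m : ℝ) * (0.6 * nthPrime n) ≤ m * (n * Real.log (nthPrime n)) := by gcongr
  have h5 : (n : ℝ) * (m * Real.log (nthPrime n)) ≤ n * (m * Real.log (nthPrime m)) := by gcongr
  have h6 : (n : ℝ) * (m * Real.log (nthPrime m)) ≤ n * (2 * nthPrime m) := by gcongr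
  linarith

theorem mul_nthPrime_le_four_mul {n m : ℕ} (hn : 6 ≤ n) (hnm : n ≤ m) (hm : m < 2 * n) :
    (n * nthPrime m : ℝ) ≤ 4 * m * nthPrime n := by
  have h13 := thirteen_le_nthPrime hn
  rcases lt_or_ge (nthPrime n) 512 with h | h
  · have h1 := Nat.two_mul_primeCounting_le_primeCounting_four_mul h13 h
    rw [primeCounting_nthPrime (by omega)] at h1
    have h2 : nthPrime m ≤ 4 * nthPrime n := nthPrime_le_of_le_primeCounting (by omega) (by omega)
    have h3 : n * nthPrime m ≤ 4 * m * nthPrime n := by nlinarith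
    exact_mod_cast h3
  have hup := Nat.primeCounting_mul_log_le h13
  rw [primeCounting_nthPrime (by omega)] at hup
  have hxR : (512 : ℝ) ≤ nthPrime n := by exact_mod_cast h
  have hlogx := Real.mul_log_two_le_log_of_two_pow_le (k := 9) (x := (nthPrime n : ℝ))
    (by norm_num; exact_mod_cast h)
  have hl2 := Real.log_two_gt_d9
  have hlow : ∀ y : ℕ, nthPrime n ≤ y → y ≤ 8 * nthPrime n →
      0.51 * (y : ℝ) ≤ y.primeCounting * Real.log (nthPrime n) := by
    intro y hy1 hy2
    have h1 := Nat.le_primeCounting_mul_log_of_512_le (h.trans hy1)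
    have h2 : Real.log y ≤ 3 * Real.log 2 + Real.log (nthPrime n) := by
      have : 3 * Real.log 2 = Real.log 8 := by
        rw [show (8 : ℝ) = 2 ^ 3 by norm_num, Real.log_pow]; norm_num
      rw [this, ← Real.log_mul (by norm_num) (by positivity)]
      exact Real.log_le_log (by exact_mod_cast (show 0 < y by omega)) (by exact_mod_cast hy2)
    have h3 : Real.log y ≤ 4 / 3 * Real.log (nthPrime n) := by
      push_cast at hlogx
      linarith
    have h4 : (y.primeCounting : ℝ) * Real.log y ≤
        y.primeCounting * (4 / 3 * Real.log (nthPrime n)) := by gcongr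
    linarith
  have hlogpos : 0 < Real.log (nthPrime n) := by
    push_cast at hlogx
    linarith
  have h8 : nthPrime m ≤ 8 * nthPrime n := by
    refine nthPrime_le_of_le_primeCounting (by omega) ?_
    have h1 := hlow (8 * nthPrime n) (by omega) le_rfl
    have h2 : (2 * n : ℝ) ≤ (8 * nthPrime n).primeCounting := by
      push_cast at h1
      by_contra! hc
      nlinarith [mul_lt_mul_of_pos_right hc hlogpos]
    have h3 : 2 * n ≤ (8 * nthPrime n).primeCounting := by exact_mod_cast h2
    omega
  have hq := hlow (nthPrime m) (nthPrime_mono hnm) h8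
  rw [primeCounting_nthPrime (by omega)] at hq
  have h1 : (n * Real.log (nthPrime n)) * (0.51 * nthPrime m) ≤
      (2 * nthPrime n) * (m * Real.log (nthPrime n)) := by gcongr
  have h2 : Real.log (nthPrime n) * (0.51 * (n * nthPrime m)) ≤
      Real.log (nthPrime n) * (2 * m * nthPrime n) := by linarith
  have h3 := le_of_mul_le_mul_left h2 hlogpos
  have h4 : (0 : ℝ) ≤ m * nthPrime n := by positivity
  linarith

theorem Real.rpow_neg_sub_le_rpow_neg {x y s : ℝ} (hx : 0 < x) (hy : 0 < y) (hs : 0 ≤ s) :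
    x ^ (-s) - s * x ^ (-(s + 1)) * (y - x) ≤ y ^ (-s) := by
  have h1 : x ^ (-(s + 1)) = x ^ (-s) / x := by
    rw [neg_add, Real.rpow_add hx, Real.rpow_neg_one, div_eq_mul_inv]
  have h2 : 1 - s * (y / x - 1) ≤ (y / x) ^ (-s) := by
    have h3 := Real.log_le_sub_one_of_pos (div_pos hy hx)
    have h4 := Real.add_one_le_exp (Real.log (y / x) * -s)
    rw [Real.rpow_def_of_pos (div_pos hy hx)]
    nlinarith
  have h5 : y ^ (-s) = x ^ (-s) * (y / x) ^ (-s) := by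
    rw [← Real.mul_rpow hx.le (div_pos hy hx).le, mul_div_cancel₀ _ hx.ne']
  rw [h5, h1]
  calc _ = x ^ (-s) * (1 - s * (y / x - 1)) := by field_simp
    _ ≤ _ := mul_le_mul_of_nonneg_left h2 (by positivity)

theorem sum_range_rpow_neg_le {f : ℕ → ℝ} {n : ℕ} {p s : ℝ} (hs : 0 < s) (hn : 6 ≤ n) (hp : 0 < p)
    (h1 : ∀ k, p ≤ f k) (h2 : ∀ k : ℕ, 3 * p * (n + k) ≤ 10 * n * f k) (N : ℕ) :
    ∑ k ∈ Finset.range N, f k ^ (-(s + 1)) ≤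
      p ^ (-(s + 1)) * (7 / 3 * n + 5 / 3 + 10 / 3 * n / s) := by
  have hnR : (6 : ℝ) ≤ n := by exact_mod_cast hn
  obtain ⟨K, hK⟩ : ∃ K, 7 * n ≤ 3 * K ∧ 3 * K ≤ 7 * n + 2 := ⟨(7 * n + 2) / 3, by omega⟩
  have hK1 : (7 * n : ℝ) ≤ 3 * K := by exact_mod_cast hK.1
  have hK2 : (3 * K : ℝ) ≤ 7 * n + 2 := by exact_mod_cast hK.2
  have hf (k : ℕ) : 0 < f k := hp.trans_le (h1 k)
  set r : ℝ := 10 / 3 * n with hr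
  have hr0 : 0 < r := by positivity
  have hfirst (k : ℕ) : f k ^ (-(s + 1)) ≤ p ^ (-(s + 1)) :=
    Real.rpow_le_rpow_of_nonpos hp (h1 k) (by linarith)
  have hsecond (k : ℕ) : f k ^ (-(s + 1)) ≤
      (p / r) ^ (-(s + 1)) * ((n + k : ℝ) ^ (-(s + 1))) := by
    rw [← Real.mul_rpow (by positivity) (by positivity)]
    refine Real.rpow_le_rpow_of_nonpos (by positivity) ?_ (by linarith)
    rw [div_mul_eq_mul_div, div_le_iff₀ hr0, hr]
    linarith [h2 k]
  have htel (x : ℝ) (hx : 0 < x) : (x + 1) ^ (-(s + 1)) ≤ (x ^ (-s) - (x + 1) ^ (-s)) / s := by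
    have := Real.rpow_neg_sub_le_rpow_neg (x := x + 1) (y := x) (by linarith) hx hs.le
    rw [le_div_iff₀ hs]
    linarith
  have hsum (N : ℕ) : ∑ k ∈ Finset.range (K + 1 + N), f k ^ (-(s + 1)) ≤
      (K + 1) * p ^ (-(s + 1)) + (p / r) ^ (-(s + 1)) *
        (((n + K : ℝ) ^ (-s) - (n + K + N : ℝ) ^ (-s)) / s) := by
    induction N with
    | zero =>
      have := Finset.sum_le_card_nsmul (Finset.range (K + 1)) _ _ fun k _ ↦ hfirst k
      simpa using this
    | succ N ih =>
      rw [← add_assoc, Finset.sum_range_succ]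
      have h3 := hsecond (K + 1 + N)
      have h4 := htel (n + K + N) (by positivity)
      have h5 : (n + (K + 1 + N : ℕ) : ℝ) = n + K + N + 1 := by push_cast; ring
      rw [h5] at h3
      have h6 := h3.trans (mul_le_mul_of_nonneg_left h4 (by positivity))
      have h7 : (n + K + (N + 1 : ℕ) : ℝ) = n + K + N + 1 := by push_cast; ring
      rw [h7]
      refine (add_le_add ih h6).trans_eq ?_
      ring
  have hmono : ∑ k ∈ Finset.range N, f k ^ (-(s + 1)) ≤
      ∑ k ∈ Finset.range (K + 1 + N), f k ^ (-(s + 1)) :=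
    Finset.sum_le_sum_of_subset_of_nonneg (Finset.range_mono (by omega))
      fun k _ _ ↦ (Real.rpow_pos_of_pos (hf k) _).le
  have hrK : r ≤ n + K := by linarith
  have hg : ((n + K : ℝ) ^ (-s) - (n + K + N : ℝ) ^ (-s)) / s ≤ r ^ (-s) / s := by
    have h3 : (n + K : ℝ) ^ (-s) ≤ r ^ (-s) := Real.rpow_le_rpow_of_nonpos hr0 hrK (by linarith)
    have h4 : 0 < (n + K + N : ℝ) ^ (-s) := by positivity
    gcongr
    linarith
  have hpr : (p / r) ^ (-(s + 1)) * (r ^ (-s) / s) = p ^ (-(s + 1)) * (r / s) := by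
    rw [Real.div_rpow hp.le hr0.le, show -s = -(s + 1) + 1 by ring, Real.rpow_add hr0,
      Real.rpow_one]
    field_simp
  have hp0 : 0 < p ^ (-(s + 1)) := by positivity
  calc _ ≤ _ := hmono.trans (hsum N)
    _ ≤ (K + 1) * p ^ (-(s + 1)) + (p / r) ^ (-(s + 1)) * (r ^ (-s) / s) := by gcongr
    _ = p ^ (-(s + 1)) * (K + 1 + r / s) := by rw [hpr]; ring
    _ ≤ _ := by
      refine mul_le_mul_of_nonneg_left ?_ hp0.le
      rw [hr]
      linarith

theorem upper_constant_lt {n s : ℝ} (hs : 0 < s) (hn : 6 ≤ n) :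
    7 / 3 * n + 5 / 3 + 10 / 3 * n / s < 2 ^ (2 + s) * n / s := by
  have h1 : (2 : ℝ) ^ (2 + s) = 4 * 2 ^ s := by
    rw [Real.rpow_add two_pos]; norm_num
  have h2 : 1 + 0.693 * s ≤ (2 : ℝ) ^ s := by
    rw [Real.rpow_def_of_pos two_pos]
    nlinarith [Real.add_one_le_exp (Real.log 2 * s), Real.log_two_gt_d9]
  rw [h1, lt_div_iff₀ hs, add_mul, div_mul_cancel₀ _ hs.ne']
  have h3 : (1 + 0.693 * s) * n ≤ 2 ^ s * n := by gcongr
  nlinarith [mul_pos hs (show 0 < n by linarith)]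

theorem le_sum_range_rpow_neg {f : ℕ → ℝ} {n : ℕ} {p s : ℝ} (hs : 0 < s) (hn : 0 < n) (hp : 0 < p)
    (hf : ∀ k, 0 < f k) (h : ∀ k < n, n * f k ≤ 4 * (n + k) * p) :
    (1 - (2 : ℝ) ^ (-s)) * n / (4 ^ (s + 1) * s * p ^ (s + 1)) ≤
      ∑ k ∈ Finset.range n, f k ^ (-(s + 1)) := by
  have hnR : (0 : ℝ) < n := by exact_mod_cast hn
  have htel (x : ℝ) (hx : 0 < x) : (x ^ (-s) - (x + 1) ^ (-s)) / s ≤ x ^ (-(s + 1)) := by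
    have := Real.rpow_neg_sub_le_rpow_neg (x := x) (y := x + 1) hx (by linarith) hs.le
    rw [div_le_iff₀ hs]
    linarith
  have hterm (k : ℕ) (hk : k < n) :
      (4 * p / n) ^ (-(s + 1)) * (((n + k : ℝ) ^ (-s) - (n + (k + 1 : ℕ) : ℝ) ^ (-s)) / s) ≤
        f k ^ (-(s + 1)) := by
    have h1 := htel (n + k) (by positivity)
    calc _ ≤ (4 * p / n) ^ (-(s + 1)) * (n + k : ℝ) ^ (-(s + 1)) := by
          push_cast
          rw [← add_assoc]
          gcongr
      _ = (4 * p / n * (n + k)) ^ (-(s + 1)) :=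
          (Real.mul_rpow (by positivity) (by positivity)).symm
      _ ≤ _ := by
          refine Real.rpow_le_rpow_of_nonpos (hf k) ?_ (by linarith)
          rw [div_mul_eq_mul_div, le_div_iff₀ hnR]
          linarith [h k hk]
  refine le_trans (le_of_eq ?_) (Finset.sum_le_sum fun k hk ↦ hterm k (Finset.mem_range.1 hk))
  rw [← Finset.mul_sum, ← Finset.sum_div, Finset.sum_range_sub' (fun k : ℕ ↦ (n + k : ℝ) ^ (-s))]
  have h1 : (n + n : ℝ) ^ (-s) = 2 ^ (-s) * n ^ (-s) := by
    rw [← two_mul, Real.mul_rpow (by norm_num) hnR.le]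
  have h2 : (n : ℝ) ^ (-s) = n ^ (-(s + 1)) * n := by
    rw [show -s = -(s + 1) + 1 by ring, Real.rpow_add hnR, Real.rpow_one]
  rw [Nat.cast_zero, add_zero, h1, h2, Real.div_rpow (by positivity) hnR.le,
    Real.mul_rpow (by norm_num) hp.le, Real.rpow_neg (by norm_num : (0 : ℝ) ≤ 4),
    Real.rpow_neg hp.le]
  have h3 : (n : ℝ) ^ (-(s + 1)) ≠ 0 := by positivity
  field_simp

/-- The natural numbers that are at least `a` are the shifts of the natural numbers by `a`. -/
def natEquivSubtypeLE (a : ℕ) : ℕ ≃ {n : ℕ // a ≤ n} where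
  toFun k := ⟨a + k, Nat.le_add_right a k⟩
  invFun n := n - a
  left_inv k := by simp
  right_inv n := Subtype.ext (Nat.add_sub_cancel' n.2)

theorem tail_sum_reciprocal_prime_powers_vs_nth_prime
    (t : ℝ) (ht : 1 < t)
    (n₁ : ℕ) (hn₁₁ : 6 ≤ n₁) (hn₁₂ : 1 / (1 - (2 : ℝ) ^ (-(1 / (t - 1)))) ≤ (n₁ : ℝ)) :
    (1 - (2 : ℝ) ^ (1 - t)) * (n₁ : ℝ) / (2 ^ (2 * t) * (t - 1) * (nthPrime n₁ : ℝ) ^ t) <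
        (∑' n : {n : ℕ // n₁ ≤ n}, (nthPrime (n : ℕ) : ℝ) ^ (-t)) ∧
      (∑' n : {n : ℕ // n₁ ≤ n}, (nthPrime (n : ℕ) : ℝ) ^ (-t)) <
        (2 : ℝ) ^ (1 + t) * (n₁ : ℝ) / ((t - 1) * (nthPrime n₁ : ℝ) ^ t) := by
  obtain ⟨s, rfl⟩ : ∃ s, t = s + 1 := ⟨t - 1, by ring⟩
  have hs : 0 < s := by linarith
  have hpos (n : ℕ) : (0 : ℝ) < nthPrime n := by exact_mod_cast (nthPrime_prime n).pos
  have hbound := sum_range_rpow_neg_le (f := fun k ↦ (nthPrime (n₁ + k) : ℝ)) hs hn₁₁ (hpos n₁)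
    (fun k ↦ by exact_mod_cast nthPrime_mono (Nat.le_add_right n₁ k))
    (fun k ↦ by
      have := nthPrime_mul_le_mul_nthPrime hn₁₁ (Nat.le_add_right n₁ k)
      push_cast at this
      exact this)
  have hnonneg (k : ℕ) : 0 ≤ (nthPrime (n₁ + k) : ℝ) ^ (-(s + 1)) := by positivity
  have hsummable : Summable fun k : ℕ ↦ (nthPrime (n₁ + k) : ℝ) ^ (-(s + 1)) :=
    summable_of_sum_range_le hnonneg hbound
  have htsum : ∑' n : {n : ℕ // n₁ ≤ n}, (nthPrime (n : ℕ) : ℝ) ^ (-(s + 1)) =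
      ∑' k : ℕ, (nthPrime (n₁ + k) : ℝ) ^ (-(s + 1)) :=
    ((natEquivSubtypeLE n₁).tsum_eq fun n ↦ (nthPrime (n : ℕ) : ℝ) ^ (-(s + 1))).symm
  rw [htsum]
  constructor
  · have h1 := le_sum_range_rpow_neg (f := fun k ↦ (nthPrime (n₁ + k) : ℝ)) (n := n₁) hs
      (by omega) (hpos n₁) (fun k ↦ hpos _)
      (fun k hk ↦ by
        have := mul_nthPrime_le_four_mul hn₁₁ (Nat.le_add_right n₁ k) (by omega)
        push_cast at this
        exact this)
    have h2 := hsummable.sum_le_tsum (Finset.range (n₁ + 1)) fun k _ ↦ hnonneg k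
    rw [Finset.sum_range_succ] at h2
    have h3 : 0 < (nthPrime (n₁ + n₁) : ℝ) ^ (-(s + 1)) := Real.rpow_pos_of_pos (hpos _) _
    have h4 : (2 : ℝ) ^ (2 * (s + 1)) = 4 ^ (s + 1) := by
      rw [Real.rpow_mul (by norm_num)]; norm_num
    rw [h4, show 1 - (s + 1) = -s by ring, show s + 1 - 1 = s by ring]
    linarith
  · refine (Real.tsum_le_of_sum_range_le hnonneg hbound).trans_lt ?_
    have h1 := upper_constant_lt hs (show (6 : ℝ) ≤ n₁ by exact_mod_cast hn₁₁)
    have h2 := Real.rpow_pos_of_pos (hpos n₁) (s + 1)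
    rw [Real.rpow_neg (hpos n₁).le, show 1 + (s + 1) = 2 + s by ring, show s + 1 - 1 = s by ring,
      ← div_div, div_eq_inv_mul _ ((nthPrime n₁ : ℝ) ^ (s + 1))]
    exact mul_lt_mul_of_pos_left h1 (by positivity)
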